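/- arXiv:2410.00870 — 2 statements merged into one kernel-verified Lean document; each statement's English description precedes it below -/
import Mathlib

section
/- Let a, b ∈ ℚ and suppose f(x) = x^12 + a·x^6 + b is irreducible over ℚ. Assume: b is a square in ℚ; 3·(4b − a^2) is not a square in ℚ; for every s ∈ ℚ with s^2 = b, neither 3·(a + 2s) nor 3·(a − 2s) is a square in ℚ; b is not a cube in ℚ; and the cubic x^3 − 3·b·x + a·b has no rational root. Then the Galois group of f over ℚ has order 72. -/
open Polynomial

/-
Let `θ ^ 6` and `φ ^ 6` be the roots of `X ^ 2 + a X + b`, with `b = s ^ 2` and `(θ φ) ^ 3 = s`. The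
splitting field is the top of the tower `k ⊆ M ⊆ M(θ φ, θ ^ 2)`, where `M = k(θ ^ 3, φ ^ 3, √-3)`.
Here `M` arises by adjoining square roots of `-a + 2 s`, `-a - 2 s` and `-3`, which are independent
modulo squares, so `[M : k] = 8`. As `M` contains the cube roots of unity, Kummer theory gives
`[M(θ φ, θ ^ 2) : M] = 9` as soon as `s` and `θ ^ 6` are independent modulo cubes in `M`. Both
elements have norm `s ^ 8` over `k` and `s` is not a cube, so the norm rules out every relation
except those equivalent to `s ^ 2 θ ^ 6 = t ^ 3`. In that case `t + s ^ 2 / t` is a root in `M` of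
the cubic `X ^ 3 - 3 b X + a b`, which then has a root in `k` because `3` does not divide `8`.
-/

open IntermediateField Module

section Kummer

variable {K L : Type*} [Field K] [Field L] [Algebra K L]

theorem exists_eq_algebraMap_mul_pow_of_isSplittingField {n : ℕ} [NeZero n] {ζ a d : K} {x w : L}
    [IsSplittingField K L (X ^ n - C a)] (hζ : IsPrimitiveRoot ζ n)
    (ha : Irreducible (X ^ n - C a)) (hx : x ^ n = algebraMap K L a)
    (hw : w ^ n = algebraMap K L d) :
    ∃ j < n, ∃ t : K, w = algebraMap K L t * x ^ j := by
  have hroots : (primitiveRoots n K).Nonempty := ⟨ζ, (mem_primitiveRoots (NeZero.pos n)).2 hζ⟩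
  have := isGalois_of_isSplittingField_X_pow_sub_C hroots ha L
  have := IsSplittingField.finiteDimensional L (X ^ n - C a)
  rcases eq_or_ne w 0 with rfl | hw0
  · exact ⟨0, NeZero.pos n, 0, by simp⟩
  set e := autEquivZmod ha L hζ
  set σ : Gal(L/K) := e.symm (.ofAdd 1)
  have hσx : σ x = algebraMap K L ζ * x := by
    simpa [Algebra.smul_def] using autEquivZmod_symm_apply_natCast ha L hx hζ 1
  have hgen (τ : Gal(L/K)) : τ ∈ Subgroup.zpowers σ := by
    refine ⟨((e τ).toAdd.val : ℤ), e.injective (Multiplicative.toAdd.injective ?_)⟩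
    simp [σ]
  obtain ⟨j, hj, hjw⟩ : ∃ j < n, algebraMap K L ζ ^ j = σ w / w := by
    refine (hζ.map_of_injective (algebraMap K L).injective).eq_pow_of_pow_eq_one ?_
    rw [div_pow, ← map_pow, hw, AlgEquiv.commutes, ← hw, div_self (pow_ne_zero n hw0)]
  have hσw : σ w ≠ 0 := (map_ne_zero σ).2 hw0
  have hxj : x ^ j ≠ 0 := by
    rcases eq_or_ne n 1 with rfl | hn
    · simp [Nat.lt_one_iff.1 hj]
    · refine pow_ne_zero j (ne_zero_pow (NeZero.ne n) ?_)
      simpa [hx] using ne_zero_of_irreducible_X_pow_sub_C' hn ha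
  have hfix : σ (w / x ^ j) = w / x ^ j := by
    rw [map_div₀, map_pow, hσx, mul_pow, hjw]
    field_simp
  obtain ⟨t, ht⟩ := (IsGalois.mem_range_algebraMap_iff_fixed (F := K) (w / x ^ j)).2 fun τ ↦
    Subgroup.zpowers_le.2 (show σ ∈ MulAction.stabilizer Gal(L/K) (w / x ^ j) from hfix) (hgen τ)
  exact ⟨j, hj, t, by rw [ht, div_mul_cancel₀ _ hxj]⟩

theorem minpoly_eq_X_pow_sub_C {p : ℕ} (hp : p.Prime) {a : K} {x : L}
    (hx : x ^ p = algebraMap K L a) (ha : ∀ t : K, t ^ p ≠ a) : minpoly K x = X ^ p - C a :=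
  (minpoly.eq_of_irreducible_of_monic (X_pow_sub_C_irreducible_of_prime hp ha) (by simp [hx])
    (monic_X_pow_sub_C a hp.ne_zero)).symm

theorem finrank_adjoin_simple_of_pow_eq {p : ℕ} (hp : p.Prime) {a : K} {x : L}
    (hx : x ^ p = algebraMap K L a) (ha : ∀ t : K, t ^ p ≠ a) : finrank K K⟮x⟯ = p := by
  have hint : IsIntegral K x := ⟨_, monic_X_pow_sub_C a hp.ne_zero, by simp [hx]⟩
  rw [adjoin.finrank hint, minpoly_eq_X_pow_sub_C hp hx ha, natDegree_X_pow_sub_C]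

theorem exists_eq_algebraMap_mul_pow_of_mem_adjoin_simple {p : ℕ} (hp : p.Prime) {ζ a d : K}
    {x w : L} (hζ : IsPrimitiveRoot ζ p) (hx : x ^ p = algebraMap K L a) (ha : ∀ t : K, t ^ p ≠ a)
    (hw : w ∈ K⟮x⟯) (hwd : w ^ p = algebraMap K L d) :
    ∃ j < p, ∃ t : K, w = algebraMap K L t * x ^ j := by
  have : NeZero p := ⟨hp.ne_zero⟩
  have hgen : AdjoinSimple.gen K x ^ p = algebraMap K K⟮x⟯ a := Subtype.ext (by simp [hx])
  have hfin : finrank K K⟮x⟯ = p := finrank_adjoin_simple_of_pow_eq hp hx ha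
  have : FiniteDimensional K K⟮x⟯ := .of_finrank_pos (hfin ▸ hp.pos)
  have htop : K⟮AdjoinSimple.gen K x⟯ = ⊤ := lift_injective K⟮x⟯ (by simp)
  have : IsSplittingField K K⟮x⟯ (X ^ p - C a) := by
    have hsplit := isSplittingField_X_pow_sub_C_of_root_adjoin_eq_top
      (K := K) (L := K⟮x⟯) (a := a) ⟨ζ, by simpa [hfin, hp.pos] using hζ⟩ (by rwa [hfin]) htop
    rwa [hfin] at hsplit
  obtain ⟨j, hj, t, ht⟩ := exists_eq_algebraMap_mul_pow_of_isSplittingField (w := ⟨w, hw⟩) hζ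
    (X_pow_sub_C_irreducible_of_prime hp ha) hgen (Subtype.ext (by simpa using hwd))
  exact ⟨j, hj, t, by simpa using congrArg Subtype.val ht⟩

theorem adjoin_image_insert {ι : Type*} [DecidableEq ι] (x : ι → L) (s : Finset ι) (j : ι) :
    adjoin K (x '' (insert j s : Finset ι)) =
      (adjoin (adjoin K (x '' s)) {x j}).restrictScalars K := by
  rw [adjoin_adjoin_left, Finset.coe_insert, Set.image_insert_eq, Set.union_singleton]

theorem prod_insert_pow_update {ι M : Type*} [DecidableEq ι] [CommMonoid M] {s : Finset ι} {j : ι}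
    (hj : j ∉ s) (f : ι → M) (e : ι → ℕ) (m : ℕ) :
    ∏ i ∈ insert j s, f i ^ Function.update e j m i = f j ^ m * ∏ i ∈ s, f i ^ e i := by
  rw [Finset.prod_insert hj, Function.update_self]
  congr 1
  exact Finset.prod_congr rfl fun i hi ↦ by
    rw [Function.update_of_ne (ne_of_mem_of_not_mem hi hj)]

/-- Multiplicative independence modulo `n`-th powers of the elements `c i`, `i ∈ s`: no nontrivial
product of their powers, with exponents less than `n`, is an `n`-th power. Restricting the
exponents loses nothing, since they only matter modulo `n`. -/
def IndependentModPow {ι : Type*} (n : ℕ) (s : Finset ι) (c : ι → K) : Prop :=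
  ∀ e : ι → ℕ, (∀ i ∈ s, e i < n) → (∃ t : K, t ^ n = ∏ i ∈ s, c i ^ e i) → ∀ i ∈ s, e i = 0

namespace IndependentModPow

variable {ι : Type*} {p : ℕ} {s : Finset ι} {c : ι → K} {x : ι → L} {ζ : K}

theorem subset {s' : Finset ι} (h : IndependentModPow p s' c) (hs : s ⊆ s')
    (hp : p ≠ 0) : IndependentModPow p s c := by
  classical
  rintro e he ⟨t, ht⟩ i hi
  have := h (fun i ↦ if i ∈ s then e i else 0) (fun i _ ↦ ?_) ⟨t, ?_⟩ i (hs hi)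
  · simpa [hi] using this
  · split_ifs with his
    exacts [he i his, Nat.pos_of_ne_zero hp]
  · simp [ht, pow_ite, Finset.prod_ite_mem, Finset.inter_eq_right.2 hs]

theorem ne_zero (h : IndependentModPow p s c) (hp : 1 < p) {i : ι} (hi : i ∈ s) : c i ≠ 0 := by
  classical
  intro hc
  have := h (Pi.single i 1) (fun j _ ↦ ?_) ⟨0, ?_⟩ i hi
  · simp at this
  · rcases eq_or_ne j i with rfl | hj
    · rwa [Pi.single_eq_same]
    · rw [Pi.single_eq_of_ne hj]
      exact zero_lt_one.trans hp
  · rw [Finset.prod_eq_zero hi (by simp [hc]), zero_pow (by lia)]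

theorem pow_ne_of_insert [DecidableEq ι] {j : ι} (hj : j ∉ s)
    (h : IndependentModPow p (insert j s) c) (hp : 1 < p)
    (hx : ∀ i, x i ^ p = algebraMap K L (c i))
    (hs : ∀ w ∈ adjoin K (x '' s), ∀ d : K, w ^ p = algebraMap K L d →
      ∃ t : K, ∃ e : ι → ℕ, (∀ i ∈ s, e i < p) ∧ w = algebraMap K L t * ∏ i ∈ s, x i ^ e i)
    (t : adjoin K (x '' s)) : t ^ p ≠ algebraMap K _ (c j) := by
  intro ht
  have ht' : (t : L) ^ p = algebraMap K L (c j) := congrArg Subtype.val ht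
  obtain ⟨u, e, he, htu⟩ := hs t t.2 (c j) ht'
  have hcu : c j = u ^ p * ∏ i ∈ s, c i ^ e i := by
    refine (algebraMap K L).injective ?_
    simp only [← ht', htu, mul_pow, map_mul, map_pow, map_prod, ← hx, ← Finset.prod_pow,
      pow_right_comm _ p]
  have hcj := h.ne_zero hp (Finset.mem_insert_self j s)
  have hu : u ≠ 0 := by rintro rfl; simp [hcu, (zero_lt_one.trans hp).ne'] at hcj
  have hzero := h (Function.update e j (p - 1)) (fun i hi ↦ ?_) ⟨c j / u, ?_⟩ j
    (Finset.mem_insert_self j s)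
  · rw [Function.update_self] at hzero
    lia
  · rcases Finset.mem_insert.1 hi with rfl | hi
    · rw [Function.update_self]
      lia
    · rw [Function.update_of_ne (ne_of_mem_of_not_mem hi hj)]
      exact he i hi
  · rw [prod_insert_pow_update hj, div_pow, div_eq_iff (pow_ne_zero p hu), mul_assoc,
      mul_comm _ (u ^ p), ← hcu, ← pow_succ, Nat.sub_add_cancel hp.le]

theorem exists_eq_mul_prod_of_mem_adjoin (h : IndependentModPow p s c) (hp : p.Prime)
    (hζ : IsPrimitiveRoot ζ p) (hx : ∀ i, x i ^ p = algebraMap K L (c i)) :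
    ∀ w ∈ adjoin K (x '' s), ∀ d : K, w ^ p = algebraMap K L d →
      ∃ t : K, ∃ e : ι → ℕ, (∀ i ∈ s, e i < p) ∧ w = algebraMap K L t * ∏ i ∈ s, x i ^ e i := by
  classical
  induction s using Finset.induction_on with
  | empty =>
    intro w hw _ _
    obtain ⟨t, rfl⟩ := mem_bot.1 (by simpa using hw)
    exact ⟨t, 0, by simp⟩
  | insert j s hj ih =>
    intro w hw d hwd
    have ih := ih (h.subset (Finset.subset_insert j s) hp.ne_zero)
    set F := adjoin K (x '' s)
    rw [adjoin_image_insert, mem_restrictScalars] at hw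
    obtain ⟨m, hm, u, hu⟩ := exists_eq_algebraMap_mul_pow_of_mem_adjoin_simple (K := F) hp
      (d := algebraMap K F d) (hζ.map_of_injective (algebraMap K F).injective) (hx j)
      (h.pow_ne_of_insert hj hp.one_lt hx ih) hw hwd
    have hxj : x j ≠ 0 := by
      refine ne_zero_pow hp.ne_zero ?_
      simpa [hx] using h.ne_zero hp.one_lt (Finset.mem_insert_self j s)
    obtain ⟨t, e, he, hut⟩ := ih u u.2 (d / c j ^ m) (by
      rw [map_div₀, map_pow, ← hx, ← hwd, hu, eq_div_iff (pow_ne_zero _ (pow_ne_zero _ hxj))]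
      simp only [IntermediateField.algebraMap_apply]
      ring)
    refine ⟨t, Function.update e j m, fun i hi ↦ ?_, ?_⟩
    · rcases Finset.mem_insert.1 hi with rfl | hi
      · simpa
      · simpa [Function.update_of_ne (ne_of_mem_of_not_mem hi hj)] using he i hi
    · rw [prod_insert_pow_update hj, hu, IntermediateField.algebraMap_apply, hut]
      ring

theorem finrank_adjoin_image (h : IndependentModPow p s c) (hp : p.Prime)
    (hζ : IsPrimitiveRoot ζ p) (hx : ∀ i, x i ^ p = algebraMap K L (c i)) :
    finrank K (adjoin K (x '' s)) = p ^ s.card := by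
  classical
  induction s using Finset.induction_on with
  | empty => simp
  | insert j s hj ih =>
    have hs := h.subset (Finset.subset_insert j s) hp.ne_zero
    have hstep := finrank_adjoin_simple_of_pow_eq (K := adjoin K (x '' s)) hp (hx j)
      (h.pow_ne_of_insert hj hp.one_lt hx (hs.exists_eq_mul_prod_of_mem_adjoin hp hζ hx))
    rw [Finset.card_insert_of_notMem hj, pow_succ, ← ih hs, ← hstep, finrank_mul_finrank,
      adjoin_image_insert]
    rfl

theorem finrank_adjoin_range [Fintype ι] (h : IndependentModPow p .univ c)
    (hp : p.Prime) (hζ : IsPrimitiveRoot ζ p) (hx : ∀ i, x i ^ p = algebraMap K L (c i)) :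
    finrank K (adjoin K (Set.range x)) = p ^ Fintype.card ι := by
  rw [← Set.image_univ, ← Finset.coe_univ, h.finrank_adjoin_image hp hζ hx, Finset.card_univ]

end IndependentModPow

theorem independentModPow_two_of_not_isSquare {u v w : K} (hu : ¬ IsSquare u) (hv : ¬ IsSquare v)
    (hw : ¬ IsSquare w) (huv : ¬ IsSquare (u * v)) (huw : ¬ IsSquare (u * w))
    (hvw : ¬ IsSquare (v * w)) (huvw : ¬ IsSquare (u * v * w)) :
    IndependentModPow 2 .univ ![u, v, w] := by
  rintro e he ⟨t, ht⟩
  have hlt := fun i ↦ he i (Finset.mem_univ i)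
  have hsq : IsSquare (u ^ e 0 * v ^ e 1 * w ^ e 2) :=
    ⟨t, by simpa [Fin.prod_univ_three, ← pow_two] using ht.symm⟩
  have h01 (i : Fin 3) : e i = 0 ∨ e i = 1 := by have := hlt i; lia
  rcases h01 0 with h0 | h0 <;> rcases h01 1 with h1 | h1 <;> rcases h01 2 with h2 | h2 <;>
    simp_all [Fin.forall_fin_succ]

end Kummer

section Norm

variable {k K : Type*} [Field k] [Field K] [Algebra k K]

theorem exists_isRoot_of_not_natDegree_dvd_finrank {P : k[X]} (hP : P.natDegree ∈ Finset.Icc 1 3)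
    (hK : ¬ P.natDegree ∣ finrank k K) {x : K} (hx : aeval x P = 0) : ∃ r, P.IsRoot r := by
  by_contra! hroot
  have hirr : Irreducible P := irreducible_of_degree_le_three_of_not_isRoot hP hroot
  have hmin := minpoly.Irreducible.eq_minpoly hirr hx
  have hdeg : (minpoly k x).natDegree = P.natDegree := by
    rw [← natDegree_C_mul (leadingCoeff_ne_zero.2 hirr.ne_zero), ← hmin]
  have hint : IsIntegral k x := minpoly.ne_zero_iff.1 fun h ↦ by simp [← hdeg, h] at hP
  exact hK (hdeg ▸ minpoly.degree_dvd hint)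

theorem norm_eq_coeff_zero_minpoly_pow {x : K} (hx : IsIntegral k x) :
    Algebra.norm k x =
      ((-1) ^ (minpoly k x).natDegree * (minpoly k x).coeff 0) ^ finrank k⟮x⟯ K := by
  rw [Algebra.norm_eq_norm_adjoin, ← adjoin.powerBasis_gen hx,
    Algebra.PowerBasis.norm_gen_eq_coeff_zero_minpoly, adjoin.powerBasis_gen, minpoly_gen,
    adjoin.powerBasis_dim]

theorem minpoly_eq_quadratic {a b : k} {α : K}
    (hα : α ^ 2 + algebraMap k K a * α + algebraMap k K b = 0)
    (hroot : ∀ t : k, t ^ 2 + a * t + b ≠ 0) : minpoly k α = X ^ 2 + C a * X + C b := by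
  have hdeg : (X ^ 2 + C a * X + C b).natDegree = 2 := by compute_degree!
  refine (minpoly.eq_of_irreducible_of_monic ?_ (by simpa using hα) (by monicity!)).symm
  exact irreducible_of_degree_le_three_of_not_isRoot (by simp [hdeg]) fun t ht ↦
    hroot t (by simpa using ht)

theorem dvd_of_pow_eq_pow_of_prime {G : Type*} [CommGroupWithZero G] {p m : ℕ} (hp : p.Prime)
    {s t : G} (hs : ∀ u : G, u ^ p ≠ s) (ht : t ^ p = s ^ m) : p ∣ m := by
  by_contra h
  obtain ⟨u, hu⟩ := (pow_mem_range_pow_of_coprime (hp.coprime_iff_not_dvd.2 h).symm s).1 ⟨t, ht⟩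
  exact hs u hu

theorem norm_eq_pow_finrank_of_quadratic {a s : k} {α : K}
    (hα : α ^ 2 + algebraMap k K a * α + algebraMap k K (s ^ 2) = 0)
    (hquad : ∀ t : k, t ^ 2 + a * t + s ^ 2 ≠ 0) : Algebra.norm k α = s ^ finrank k K := by
  have hmin := minpoly_eq_quadratic hα hquad
  have hdeg : (minpoly k α).natDegree = 2 := by rw [hmin]; compute_degree!
  have hcoeff : (minpoly k α).coeff 0 = s ^ 2 := by simp [hmin, coeff_zero_eq_eval_zero]
  have hint : IsIntegral k α := minpoly.ne_zero_iff.1 fun h ↦ by simp [h] at hdeg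
  rw [norm_eq_coeff_zero_minpoly_pow hint, hdeg, hcoeff, neg_one_sq, one_mul, ← pow_mul, ← hdeg,
    ← adjoin.finrank hint, finrank_mul_finrank]

theorem cube_ne_sq_mul_of_quadratic {a s : k} {α : K} (hK : ¬ 3 ∣ finrank k K)
    (hα : α ^ 2 + algebraMap k K a * α + algebraMap k K (s ^ 2) = 0) (hs : s ≠ 0)
    (hcub : ∀ r : k, r ^ 3 - 3 * s ^ 2 * r + a * s ^ 2 ≠ 0) (t : K) :
    t ^ 3 ≠ algebraMap k K s ^ 2 * α := by
  intro ht
  set S := algebraMap k K s with hS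
  have hS0 : S ≠ 0 := by simpa [hS] using hs
  rw [map_pow] at hα
  have hα0 : α ≠ 0 := by rintro rfl; simp [← hS, hS0] at hα
  have ht0 : t ≠ 0 := by rintro rfl; simp [hS0, hα0] at ht
  have hroot : aeval (t + S ^ 2 / t) (X ^ 3 - C (3 * s ^ 2) * X + C (a * s ^ 2)) = 0 := by
    have : t ^ 6 + algebraMap k K a * S ^ 2 * t ^ 3 + S ^ 6 = 0 := by
      linear_combination (t ^ 3 + S ^ 2 * α + algebraMap k K a * S ^ 2) * ht + S ^ 4 * hα
    simp only [map_add, map_sub, map_mul, map_pow, map_ofNat, aeval_X, aeval_C, ← hS]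
    field_simp
    linear_combination this
  have hdeg : (X ^ 3 - C (3 * s ^ 2) * X + C (a * s ^ 2)).natDegree = 3 := by compute_degree!
  obtain ⟨r, hr⟩ := exists_isRoot_of_not_natDegree_dvd_finrank (by rw [hdeg]; simp)
    (by rwa [hdeg]) hroot
  exact hcub r (by simpa using hr)

theorem independentModPow_three_of_quadratic {a s : k} {α : K} (hK : ¬ 3 ∣ finrank k K)
    (hα : α ^ 2 + algebraMap k K a * α + algebraMap k K (s ^ 2) = 0)
    (hquad : ∀ t : k, t ^ 2 + a * t + s ^ 2 ≠ 0) (hs : ∀ t : k, t ^ 3 ≠ s)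
    (hcub : ∀ r : k, r ^ 3 - 3 * s ^ 2 * r + a * s ^ 2 ≠ 0) :
    IndependentModPow 3 .univ ![algebraMap k K s, α] := by
  rintro e he ⟨t, ht⟩
  have hlt := fun i ↦ he i (Finset.mem_univ i)
  have ht : t ^ 3 = algebraMap k K s ^ e 0 * α ^ e 1 := by simpa [Fin.prod_univ_two] using ht
  have hdvd : 3 ∣ e 0 + e 1 := by
    have hnorm : Algebra.norm k t ^ 3 = s ^ (finrank k K * (e 0 + e 1)) := by
      rw [← map_pow, ht, map_mul, map_pow, map_pow, norm_eq_pow_finrank_of_quadratic hα hquad,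
        Algebra.norm_algebraMap, ← pow_mul, ← pow_mul, ← pow_add, mul_add]
    have hmul := dvd_of_pow_eq_pow_of_prime Nat.prime_three hs hnorm
    exact (Nat.prime_three.dvd_mul.1 hmul).resolve_left hK
  have hs0 : s ≠ 0 := by rintro rfl; exact hs 0 (by simp)
  have hα0 : α ≠ 0 := by rintro rfl; simp [hs0] at hα
  have hcases : e 0 = 0 ∧ e 1 = 0 ∨ e 0 = 2 ∧ e 1 = 1 ∨ e 0 = 1 ∧ e 1 = 2 := by
    have := hlt 0; have := hlt 1; lia
  obtain ⟨h0, h1⟩ | ⟨h0, h1⟩ | ⟨h0, h1⟩ := hcases <;> rw [h0, h1] at ht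
  · simpa [Fin.forall_fin_two] using ⟨h0, h1⟩
  · exact absurd (by simpa using ht) (cube_ne_sq_mul_of_quadratic hK hα hs0 hcub t)
  · refine absurd ?_ (cube_ne_sq_mul_of_quadratic hK hα hs0 hcub (t ^ 2 / α))
    rw [div_pow, div_eq_iff (pow_ne_zero 3 hα0)]
    linear_combination (t ^ 3 + algebraMap k K s * α ^ 2) * ht

end Norm

section Dodecic

variable {k : Type*} [Field k]

theorem two_ne_zero_of_not_isSquare_neg_three (h : ¬ IsSquare (-3 : k)) : (2 : k) ≠ 0 :=
  fun h2 ↦ h ⟨1, by linear_combination -2 * h2⟩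

theorem three_ne_zero_of_not_isSquare_neg_three (h : ¬ IsSquare (-3 : k)) : (3 : k) ≠ 0 :=
  fun h3 ↦ h ⟨0, by linear_combination -h3⟩

theorem not_irreducible_dodecic_of_mul_eq {a b p q q' : k} (hp : p * (q' - q) = 0)
    (ha : q + q' - p ^ 2 = a) (hb : q * q' = b) :
    ¬ Irreducible (X ^ 12 + C a * X ^ 6 + C b) := by
  intro hirr
  have hmul : X ^ 12 + C a * X ^ 6 + C b =
      (X ^ 6 + C p * X ^ 3 + C q) * (X ^ 6 - C p * X ^ 3 + C q') := by
    have hp' : C p * (C q' - C q) = 0 := by rw [← C_sub, ← C_mul, hp, C_0]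
    rw [← ha, ← hb, C_sub, C_add, C_pow, C_mul]
    linear_combination -X ^ 3 * hp'
  have hdeg : (X ^ 6 + C p * X ^ 3 + C q).natDegree = 6 := by compute_degree!
  have hdeg' : (X ^ 6 - C p * X ^ 3 + C q').natDegree = 6 := by compute_degree!
  rcases hirr.isUnit_or_isUnit hmul with h | h
  · simp [natDegree_eq_zero_of_isUnit h] at hdeg
  · simp [natDegree_eq_zero_of_isUnit h] at hdeg'

theorem quadratic_ne_zero_of_irreducible {a b : k}
    (h : Irreducible (X ^ 12 + C a * X ^ 6 + C b)) (t : k) : t ^ 2 + a * t + b ≠ 0 := fun ht ↦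
  not_irreducible_dodecic_of_mul_eq (p := 0) (q := -t) (q' := a + t) (by ring) (by ring)
    (by linear_combination -ht) h

theorem not_isSquare_sq_sub_of_irreducible {a b : k} (h2 : (2 : k) ≠ 0)
    (h : Irreducible (X ^ 12 + C a * X ^ 6 + C b)) : ¬ IsSquare (a ^ 2 - 4 * b) := by
  rintro ⟨t, ht⟩
  refine quadratic_ne_zero_of_irreducible h ((t - a) / 2) ?_
  field_simp
  linear_combination -ht

theorem not_isSquare_neg_add_of_irreducible {a b s : k} (hs : s ^ 2 = b)
    (h : Irreducible (X ^ 12 + C a * X ^ 6 + C b)) : ¬ IsSquare (-a + 2 * s) := by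
  rintro ⟨t, ht⟩
  exact not_irreducible_dodecic_of_mul_eq (p := t) (q := s) (q' := s) (by ring)
    (by linear_combination ht) (by linear_combination hs) h

theorem independentModPow_two_of_irreducible {a s : k} (h3 : ¬ IsSquare (-3 : k))
    (hirr : Irreducible (X ^ 12 + C a * X ^ 6 + C (s ^ 2)))
    (hadd : ¬ IsSquare (3 * (a + 2 * s))) (hsub : ¬ IsSquare (3 * (a - 2 * s)))
    (hd : ¬ IsSquare (3 * (4 * s ^ 2 - a ^ 2))) :
    IndependentModPow 2 .univ ![-a + 2 * s, -a - 2 * s, -3] := by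
  refine independentModPow_two_of_not_isSquare (not_isSquare_neg_add_of_irreducible rfl hirr) ?_ h3
    ?_ ?_ ?_ ?_
  · simpa [sub_eq_add_neg] using not_isSquare_neg_add_of_irreducible (neg_sq s) hirr
  · convert not_isSquare_sq_sub_of_irreducible (two_ne_zero_of_not_isSquare_neg_three h3) hirr
      using 2
    ring
  · convert hsub using 2
    ring
  · convert hadd using 2
    ring
  · convert hd using 2
    ring

theorem separable_of_irreducible {a b : k} (h3 : ¬ IsSquare (-3 : k))
    (h : Irreducible (X ^ 12 + C a * X ^ 6 + C b)) :
    (X ^ 12 + C a * X ^ 6 + C b).Separable := by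
  refine (separable_iff_derivative_ne_zero h).2 fun hder ↦ ?_
  have h11 := congrArg (coeff · 11) hder
  rw [coeff_derivative] at h11
  have h12 : (11 + 1 : k) = 0 := by simpa [coeff_X_pow, coeff_C] using h11
  exact mul_ne_zero (pow_ne_zero 2 (two_ne_zero_of_not_isSquare_neg_three h3))
    (three_ne_zero_of_not_isSquare_neg_three h3) (by linear_combination h12)

end Dodecic

section RootsOfUnity

variable {k : Type*} [Field k]

theorem isPrimitiveRoot_six_of_sq_eq_neg_three {δ : k} (h2 : (2 : k) ≠ 0) (h3 : (3 : k) ≠ 0)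
    (hδ : δ ^ 2 = -3) : IsPrimitiveRoot ((1 + δ) / 2) 6 := by
  have : NeZero ((6 : ℕ) : k) := ⟨by
    push_cast
    rw [show (6 : k) = 2 * 3 by norm_num]
    exact mul_ne_zero h2 h3⟩
  refine isRoot_cyclotomic_iff.1 ?_
  simp only [cyclotomic_six, IsRoot.def, eval_add, eval_sub, eval_pow, eval_X, eval_one]
  field_simp
  linear_combination hδ

theorem mem_of_pow_eq_pow {E : Type*} [Field E] [Algebra k E] {N : IntermediateField k E} {n : ℕ}
    [NeZero n] {ζ x r : E} (hζ : IsPrimitiveRoot ζ n) (hζN : ζ ∈ N) (hx : x ∈ N)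
    (hr : r ^ n = x ^ n) : r ∈ N := by
  rcases eq_or_ne x 0 with rfl | hx0
  · rw [zero_pow (NeZero.ne n)] at hr
    exact eq_zero_of_pow_eq_zero hr ▸ zero_mem N
  obtain ⟨i, -, hi⟩ := hζ.eq_pow_of_pow_eq_one (ξ := r / x)
    (by rw [div_pow, hr, div_self (pow_ne_zero n hx0)])
  exact (eq_div_iff hx0).1 hi ▸ mul_mem (pow_mem hζN i) hx

end RootsOfUnity

section Roots

variable {k E : Type*} [Field k] [Field E] [Algebra k E]

/-- `θ` and `φ` are sixth roots of the two roots of `X ^ 2 + a X + s ^ 2`, normalised so that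
`(θ φ) ^ 3 = s`, and `δ` is a square root of `-3`. The roots of `X ^ 12 + a X ^ 6 + s ^ 2` are
then the products of `θ` and `φ` with sixth roots of unity. -/
structure IsRootSystem (a s : k) (θ φ δ : E) : Prop where
  add_eq : θ ^ 6 + φ ^ 6 = -algebraMap k E a
  mul_eq : (θ * φ) ^ 3 = algebraMap k E s
  sq_eq : δ ^ 2 = -3

theorem exists_sq_eq_neg_three_of_splits {P : E[X]} (hP : P.Splits) (hP0 : P ≠ 0) {θ : E}
    (hθ0 : θ ≠ 0) (hθ : X ^ 6 - C (θ ^ 6) ∣ P) : ∃ δ : E, δ ^ 2 = -3 := by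
  have hdvd : X ^ 2 + C θ * X + C (θ ^ 2) ∣ X ^ 6 - C (θ ^ 6) :=
    ⟨(X ^ 2 - C (θ ^ 2)) * (X ^ 2 - C θ * X + C (θ ^ 2)), by simp only [C_pow]; ring⟩
  have hdeg : (X ^ 2 + C θ * X + C (θ ^ 2)).degree = 2 := by compute_degree!
  obtain ⟨ρ, hρ⟩ := (hP.of_dvd hP0 (hdvd.trans hθ)).exists_eval_eq_zero
    (hdeg ▸ two_ne_zero)
  have hρ' : ρ ^ 2 + θ * ρ + θ ^ 2 = 0 := by simpa using hρ
  refine ⟨(2 * ρ + θ) / θ, ?_⟩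
  field_simp
  linear_combination 4 * hρ'

theorem exists_isRootSystem_of_splits {a s : k} (hs : s ≠ 0)
    (hsplit : ((X ^ 12 + C a * X ^ 6 + C (s ^ 2)).map (algebraMap k E)).Splits) :
    ∃ θ φ δ : E, IsRootSystem a s θ φ δ := by
  set A := algebraMap k E a
  set S := algebraMap k E s with hS
  have hS0 : S ≠ 0 := by simpa [hS] using hs
  set P := (X ^ 12 + C a * X ^ 6 + C (s ^ 2)).map (algebraMap k E)
  have hP : P = X ^ 12 + C A * X ^ 6 + C (S ^ 2) := by simp [P, A, S]
  have hdeg : P.degree = 12 := by rw [hP]; compute_degree!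
  have hP0 : P ≠ 0 := by rintro h; simp [h] at hdeg
  obtain ⟨θ, hθ⟩ := hsplit.exists_eval_eq_zero (by simp [hdeg])
  replace hθ : θ ^ 12 + A * θ ^ 6 + S ^ 2 = 0 := by simpa [hP] using hθ
  have hθ0 : θ ≠ 0 := by rintro rfl; simp [hS0] at hθ
  have hfac : P = (X ^ 6 - C (θ ^ 6)) * (X ^ 6 - C (-A - θ ^ 6)) := by
    have hS2 : S ^ 2 = -(θ ^ 12 + A * θ ^ 6) := by linear_combination hθ
    rw [hP, hS2]
    simp only [C_sub, C_neg, C_pow, C_add, C_mul]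
    ring
  obtain ⟨φ, hφ⟩ := (hsplit.of_dvd hP0 (hfac ▸ dvd_mul_left _ _)).exists_eval_eq_zero
    (by rw [degree_X_pow_sub_C (by simp)]; simp)
  replace hφ : φ ^ 6 = -A - θ ^ 6 := by simpa [sub_eq_zero] using hφ
  obtain ⟨δ, hδ⟩ := exists_sq_eq_neg_three_of_splits hsplit hP0 hθ0 (hfac ▸ dvd_mul_right _ _)
  have hsq : ((θ * φ) ^ 3) ^ 2 = S ^ 2 := by linear_combination θ ^ 6 * hφ - hθ
  rcases sq_eq_sq_iff_eq_or_eq_neg.1 hsq with h | h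
  · exact ⟨θ, φ, δ, by linear_combination hφ, h, hδ⟩
  · exact ⟨θ, -φ, δ, by linear_combination hφ, by linear_combination -h, hδ⟩

variable (k) in
/-- The subfield generated by `θ ^ 3`, `φ ^ 3` and `√-3`, presented through generators whose
squares lie in the base field: `(θ ^ 3 ± φ ^ 3) ^ 2 = -a ± 2 s`. -/
def quadraticSubfield (θ φ δ : E) : IntermediateField k E :=
  adjoin k (Set.range ![θ ^ 3 + φ ^ 3, θ ^ 3 - φ ^ 3, δ])

theorem pow_three_mem_quadraticSubfield (h2 : (2 : E) ≠ 0) (θ φ δ : E) :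
    θ ^ 3 ∈ quadraticSubfield k θ φ δ := by
  set M := quadraticSubfield k θ φ δ
  have hadd : θ ^ 3 + φ ^ 3 ∈ M := subset_adjoin k _ ⟨0, rfl⟩
  have hsub : θ ^ 3 - φ ^ 3 ∈ M := subset_adjoin k _ ⟨1, rfl⟩
  have hθ : θ ^ 3 = ((θ ^ 3 + φ ^ 3) + (θ ^ 3 - φ ^ 3)) / 2 := by field_simp; ring
  exact hθ ▸ div_mem (add_mem hadd hsub) (ofNat_mem M 2)

theorem mem_quadraticSubfield (θ φ δ : E) : δ ∈ quadraticSubfield k θ φ δ :=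
  subset_adjoin k _ ⟨2, rfl⟩

namespace IsRootSystem

variable {a s : k} {θ φ δ : E}

theorem finrank_quadraticSubfield (h : IsRootSystem a s θ φ δ) (h2 : (2 : k) ≠ 0)
    (hind : IndependentModPow 2 .univ ![-a + 2 * s, -a - 2 * s, -3]) :
    finrank k (quadraticSubfield k θ φ δ) = 8 := by
  have hζ : IsPrimitiveRoot (-1 : k) 2 := IsPrimitiveRoot.iff_orderOf.2 <|
    orderOf_eq_prime (by ring) fun h1 ↦ h2 (by linear_combination -h1)
  have hadd : (θ ^ 3 + φ ^ 3) ^ 2 = algebraMap k E (-a + 2 * s) := by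
    simp only [map_add, map_neg, map_mul, map_ofNat]
    linear_combination h.add_eq + 2 * h.mul_eq
  have hsub : (θ ^ 3 - φ ^ 3) ^ 2 = algebraMap k E (-a - 2 * s) := by
    simp only [map_sub, map_neg, map_mul, map_ofNat]
    linear_combination h.add_eq - 2 * h.mul_eq
  have hδ : δ ^ 2 = algebraMap k E (-3) := by simpa [map_ofNat] using h.sq_eq
  refine hind.finrank_adjoin_range Nat.prime_two hζ fun i ↦ ?_
  fin_cases i
  exacts [hadd, hsub, hδ]

theorem quadratic_eq_zero (h : IsRootSystem a s θ φ δ) :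
    (θ ^ 6) ^ 2 + algebraMap k E a * θ ^ 6 + algebraMap k E (s ^ 2) = 0 := by
  rw [map_pow]
  linear_combination θ ^ 6 * h.add_eq - (algebraMap k E s + (θ * φ) ^ 3) * h.mul_eq

theorem finrank_adjoin_quadraticSubfield (h : IsRootSystem a s θ φ δ) (h2 : (2 : E) ≠ 0)
    (h3 : (3 : E) ≠ 0) (hM : finrank k (quadraticSubfield k θ φ δ) = 8)
    (hquad : ∀ t : k, t ^ 2 + a * t + s ^ 2 ≠ 0) (hs : ∀ t : k, t ^ 3 ≠ s)
    (hcub : ∀ r : k, r ^ 3 - 3 * s ^ 2 * r + a * s ^ 2 ≠ 0) :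
    finrank (quadraticSubfield k θ φ δ)
      (adjoin (quadraticSubfield k θ φ δ) (Set.range ![θ * φ, θ ^ 2])) = 9 := by
  set M := quadraticSubfield k θ φ δ
  let α : M := ⟨θ ^ 3, pow_three_mem_quadraticSubfield h2 θ φ δ⟩ ^ 2
  have hα : (α : E) = θ ^ 6 := (pow_mul θ 3 2).symm
  let δ' : M := ⟨δ, mem_quadraticSubfield θ φ δ⟩
  have hζ : IsPrimitiveRoot (((1 + δ') / 2) ^ 2) 3 := by
    have hδ' : δ' ^ 2 = -3 := Subtype.ext h.sq_eq
    refine (isPrimitiveRoot_six_of_sq_eq_neg_three ?_ ?_ hδ').pow (by simp) rfl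
    · exact fun h0 ↦ h2 (congrArg Subtype.val h0)
    · exact fun h0 ↦ h3 (congrArg Subtype.val h0)
  have hαeq : α ^ 2 + algebraMap k M a * α + algebraMap k M (s ^ 2) = 0 :=
    Subtype.ext (by simpa [hα] using h.quadratic_eq_zero)
  have hind : IndependentModPow 3 .univ ![algebraMap k M s, α] :=
    independentModPow_three_of_quadratic (by simp [hM]) hαeq hquad hs hcub
  refine hind.finrank_adjoin_range Nat.prime_three hζ fun i ↦ ?_
  fin_cases i
  · exact h.mul_eq
  · exact (pow_mul θ 2 3).symm.trans hα.symm

theorem pow_six_eq_or_of_mem_rootSet (h : IsRootSystem a s θ φ δ) {r : E}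
    (hr : r ∈ (X ^ 12 + C a * X ^ 6 + C (s ^ 2)).rootSet E) : r ^ 6 = θ ^ 6 ∨ r ^ 6 = φ ^ 6 := by
  have hr0 : r ^ 12 + algebraMap k E a * r ^ 6 + algebraMap k E s ^ 2 = 0 := by
    simpa using aeval_eq_zero_of_mem_rootSet hr
  have hmul : (r ^ 6 - θ ^ 6) * (r ^ 6 - φ ^ 6) = 0 := by
    linear_combination hr0 - r ^ 6 * h.add_eq + (algebraMap k E s + (θ * φ) ^ 3) * h.mul_eq
  simpa only [mul_eq_zero, sub_eq_zero] using hmul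

theorem adjoin_quadraticSubfield_eq_top (h : IsRootSystem a s θ φ δ) (h2 : (2 : E) ≠ 0)
    (h3 : (3 : E) ≠ 0) (hs : s ≠ 0)
    [hE : IsSplittingField k E (X ^ 12 + C a * X ^ 6 + C (s ^ 2))] :
    adjoin (quadraticSubfield k θ φ δ) (Set.range ![θ * φ, θ ^ 2]) = ⊤ := by
  set M := quadraticSubfield k θ φ δ
  set N := adjoin M (Set.range ![θ * φ, θ ^ 2])
  have hMN {y : E} (hy : y ∈ M) : y ∈ N := N.algebraMap_mem ⟨y, hy⟩
  have hθφ0 : θ * φ ≠ 0 := by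
    refine ne_zero_pow three_ne_zero ?_
    simpa [h.mul_eq] using hs
  have hθ0 : θ ≠ 0 := left_ne_zero_of_mul hθφ0
  have hθφ : θ * φ ∈ N := subset_adjoin M _ ⟨0, rfl⟩
  have hθ2 : θ ^ 2 ∈ N := subset_adjoin M _ ⟨1, rfl⟩
  have hθ : θ ∈ N := by
    have hdiv := div_mem (hMN (pow_three_mem_quadraticSubfield h2 θ φ δ)) hθ2
    rwa [pow_succ' θ 2, mul_div_cancel_right₀ _ (pow_ne_zero 2 hθ0)] at hdiv
  have hφ : φ ∈ N := mul_div_cancel_left₀ φ hθ0 ▸ div_mem hθφ hθ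
  have hζ := isPrimitiveRoot_six_of_sq_eq_neg_three h2 h3 h.sq_eq
  have hζN : (1 + δ) / 2 ∈ N :=
    div_mem (add_mem (one_mem N) (hMN (mem_quadraticSubfield θ φ δ))) (ofNat_mem N 2)
  rw [← restrictScalars_eq_top_iff (K := k), eq_top_iff,
    ← (isSplittingField_iff_intermediateField.1 hE).2, adjoin_le_iff]
  intro r hr
  rcases h.pow_six_eq_or_of_mem_rootSet hr with hr | hr
  exacts [mem_of_pow_eq_pow hζ hζN hθ hr, mem_of_pow_eq_pow hζ hζN hφ hr]

end IsRootSystem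

theorem finrank_eq_seventytwo {a s : k} (h3 : ¬ IsSquare (-3 : k))
    (hirr : Irreducible (X ^ 12 + C a * X ^ 6 + C (s ^ 2)))
    [hE : IsSplittingField k E (X ^ 12 + C a * X ^ 6 + C (s ^ 2))]
    (hind : IndependentModPow 2 .univ ![-a + 2 * s, -a - 2 * s, -3])
    (hs : ∀ t : k, t ^ 3 ≠ s) (hcub : ∀ r : k, r ^ 3 - 3 * s ^ 2 * r + a * s ^ 2 ≠ 0) :
    finrank k E = 72 := by
  have hk2 := two_ne_zero_of_not_isSquare_neg_three h3
  have hk3 := three_ne_zero_of_not_isSquare_neg_three h3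
  have hE2 : (2 : E) ≠ 0 := by simpa [map_ofNat] using (map_ne_zero (algebraMap k E)).2 hk2
  have hE3 : (3 : E) ≠ 0 := by simpa [map_ofNat] using (map_ne_zero (algebraMap k E)).2 hk3
  have hs0 : s ≠ 0 := fun h0 ↦ hs 0 (by simp [h0])
  obtain ⟨θ, φ, δ, h⟩ := exists_isRootSystem_of_splits hs0 hE.splits
  have hM := h.finrank_quadraticSubfield hk2 hind
  have hN := h.finrank_adjoin_quadraticSubfield hE2 hE3 hM
    (quadratic_ne_zero_of_irreducible hirr) hs hcub
  rw [h.adjoin_quadraticSubfield_eq_top hE2 hE3 hs0, finrank_top'] at hN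
  rw [← finrank_mul_finrank k (quadraticSubfield k θ φ δ) E, hM, hN]

end Roots

theorem gal_order_seventytwo_of_12T37_general {k : Type*} [Field k] (h3 : ¬ IsSquare (-3 : k))
    (a b : k) (f : k[X]) (hf : f = X ^ 12 + C a * X ^ 6 + C b) (hirr : Irreducible f)
    (hb_sq : ∃ s : k, s ^ 2 = b)
    (hd : ¬ ∃ s : k, s ^ 2 = 3 * (4 * b - a ^ 2))
    (hsq : ∀ s : k, s ^ 2 = b →
      (¬ ∃ t : k, t ^ 2 = 3 * (a + 2 * s)) ∧ ¬ ∃ t : k, t ^ 2 = 3 * (a - 2 * s))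
    (hnc : ¬ ∃ c : k, c ^ 3 = b)
    (hnr : ¬ ∃ r : k, r ^ 3 - 3 * b * r + a * b = 0) :
    Nat.card f.Gal = 72 := by
  obtain ⟨s, rfl⟩ := hb_sq
  subst hf
  have not_isSquare {c : k} (h : ¬ ∃ t : k, t ^ 2 = c) : ¬ IsSquare c :=
    fun ⟨t, ht⟩ ↦ h ⟨t, by rw [ht, sq]⟩
  have hind := independentModPow_two_of_irreducible h3 hirr (not_isSquare (hsq s rfl).1)
    (not_isSquare (hsq s rfl).2) (not_isSquare hd)
  have hs (t : k) (ht : t ^ 3 = s) : False := hnc ⟨t ^ 2, by rw [← ht, pow_right_comm]⟩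
  rw [Gal.card_of_separable (separable_of_irreducible h3 hirr)]
  exact finrank_eq_seventytwo h3 hirr hind hs fun r hr ↦ hnr ⟨r, hr⟩

theorem gal_order_seventytwo_of_12T37 (a b : ℚ) (f : ℚ[X])
    (hf : f = X ^ 12 + C a * X ^ 6 + C b) (hirr : Irreducible f)
    (hb_sq : ∃ s : ℚ, s ^ 2 = b)
    (hd : ¬ ∃ s : ℚ, s ^ 2 = 3 * (4 * b - a ^ 2))
    (hsq : ∀ s : ℚ, s ^ 2 = b → (¬ ∃ t : ℚ, t ^ 2 = 3 * (a + 2 * s)) ∧ ¬ ∃ t : ℚ, t ^ 2 = 3 * (a - 2 * s))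
    (hnc : ¬ ∃ c : ℚ, c ^ 3 = b)
    (hnr : ¬ ∃ r : ℚ, r ^ 3 - 3 * b * r + a * b = 0) :
    Nat.card f.Gal = 72 := by
  refine gal_order_seventytwo_of_12T37_general ?_ a b f hf hirr hb_sq hd hsq hnc hnr
  rintro ⟨t, ht⟩
  linarith [mul_self_nonneg t]
end

section
/- Let a, b ∈ ℚ and suppose f(x) = x^12 + a·x^6 + b is irreducible over ℚ. Assume: b is not a square in ℚ; b·(a^2 − 4b) is not a square in ℚ; 3·(4b − a^2) is not a square in ℚ; either −3b is a square in ℚ or 3b·(4b − a^2) is a square in ℚ; and either b is a cube in ℚ or the cubic x^3 − 3·b·x + a·b has a rational root. Then the Galois group of f over ℚ has order 24. -/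
open Polynomial

/-!
Work over a field `k` in which `-3` is not a square. Let `α` be a root of `f` and `ζ` a primitive
sixth root of unity. In `k(α, ζ)` both `-3` and the discriminant
`a ^ 2 - 4 * b = (2 * α ^ 6 + a) ^ 2` are squares, so either alternative for `-3 * b` makes `b` a
square there. It is also a cube: by Cardano's formulas a root of the resolvent cubic
`x ^ 3 - 3 * b * x + a * b` yields a cube root of `b * α ^ 6`. Hence `b = c ^ 6`, the roots of `f`
are `ζ ^ i * α` and `ζ ^ i * c / α`, and `k(α, ζ)` is the splitting field.

Its degree is `12 * 2` as soon as `-3` is not a square in `k(α)`. Descend along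
`k(α) ⊃ k(α ^ 3) ⊃ k(α ^ 6) ⊃ k`: the first step has odd degree and creates no squares; if `-3`
became a square in the second one, `-3` or `-3 * α ^ 6` would be a square in `k(α ^ 6)`. The former
would make `-3` or `-3 * (a ^ 2 - 4 * b)` a square in `k`, the latter `b = N(α ^ 6)`.
-/

open IntermediateField

section SquareDescent

variable {F E : Type*} [Field F] [Field E] [Algebra F E]

lemma isSquare_of_isSquare_algebraMap_of_odd_finrank (hodd : Odd (Module.finrank F E)) {c : F}
    (hc : IsSquare (algebraMap F E c)) : IsSquare c := by
  obtain ⟨m, hm⟩ := hodd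
  have hnorm : IsSquare (c ^ (2 * m + 1)) := by
    simpa only [Algebra.norm_algebraMap, hm] using hc.map (Algebra.norm F)
  rcases eq_or_ne c 0 with rfl | hc0
  · exact IsSquare.zero
  · have hdiv := hnorm.div ((even_two_mul m).isSquare_pow c)
    rwa [pow_succ, mul_div_cancel_left₀ _ (pow_ne_zero _ hc0)] at hdiv

lemma exists_eq_add_mul_of_mem_adjoin_simple {y : E} {a b : F}
    (hy : y ^ 2 + algebraMap F E a * y + algebraMap F E b = 0) {e : E} (he : e ∈ F⟮y⟯) :
    ∃ p q : F, e = algebraMap F E p + algebraMap F E q * y := by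
  set g : F[X] := X ^ 2 + C a * X + C b with hg
  have hmonic : g.Monic := by rw [hg]; monicity!
  have hroot : aeval y g = 0 := by simpa [hg] using hy
  have hint : IsIntegral F y := ⟨g, hmonic, hroot⟩
  rw [← mem_toSubalgebra, adjoin_simple_toSubalgebra_of_isAlgebraic hint.isAlgebraic,
    Algebra.adjoin_singleton_eq_range_aeval] at he
  obtain ⟨h, rfl⟩ := he
  have hdeg : (h %ₘ g).natDegree ≤ 1 := by
    have := natDegree_modByMonic_lt h hmonic (by rintro h1; simp [h1] at hroot)
    have : g.natDegree = 2 := by rw [hg]; compute_degree!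
    omega
  obtain ⟨q, p, hqp⟩ := exists_eq_X_add_C_of_natDegree_le_one hdeg
  refine ⟨p, q, ?_⟩
  rw [AlgHom.toRingHom_eq_coe, RingHom.coe_coe, ← aeval_modByMonic_eq_self_of_root hroot, hqp]
  simp [add_comm]

lemma isSquare_or_isSquare_mul_discrim_of_isSquare_adjoin_simple (h2 : (2 : F) ≠ 0) {y : E}
    {a b c : F} (hy : y ^ 2 + algebraMap F E a * y + algebraMap F E b = 0)
    (hc : IsSquare (algebraMap F F⟮y⟯ c)) : IsSquare c ∨ IsSquare (c * (a ^ 2 - 4 * b)) := by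
  obtain ⟨e, he⟩ := hc
  replace he : algebraMap F E c = e * e := congrArg (algebraMap F⟮y⟯ E) he
  obtain ⟨p, q, hpq⟩ := exists_eq_add_mul_of_mem_adjoin_simple hy e.2
  rw [hpq] at he
  by_cases hyF : ∃ z : F, algebraMap F E z = y
  · obtain ⟨z, rfl⟩ := hyF
    exact .inl ⟨p + q * z, (algebraMap F E).injective (by simpa using he)⟩
  have hcoeff : q * (2 * p - a * q) = 0 := by
    by_contra hne
    refine hyF ⟨(c - p ^ 2 + q ^ 2 * b) / (q * (2 * p - a * q)), ?_⟩
    rw [map_div₀, div_eq_iff (by rwa [Ne, map_eq_zero])]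
    simp only [map_add, map_sub, map_mul, map_pow, map_ofNat]
    linear_combination he + algebraMap F E q ^ 2 * hy
  have hconst : c = p ^ 2 - q ^ 2 * b := by
    have hcoeff' := congrArg (algebraMap F E) hcoeff
    apply (algebraMap F E).injective
    simp only [map_sub, map_mul, map_pow, map_ofNat, map_zero] at hcoeff' ⊢
    linear_combination he + algebraMap F E q ^ 2 * hy + y * hcoeff'
  rcases mul_eq_zero.1 hcoeff with rfl | hp
  · exact .inl ⟨p, by rw [hconst]; ring⟩
  · refine .inr ⟨q * (a ^ 2 - 4 * b) / 2, ?_⟩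
    have hp' : p = a * q / 2 := by rw [eq_div_iff h2]; linear_combination hp
    rw [hconst, hp']
    field_simp
    ring

lemma isSquare_coeff_zero_minpoly_of_isSquare_mul_gen {y : E} (hy : IsIntegral F y)
    (heven : Even (minpoly F y).natDegree) {c : F} (hc : c ≠ 0)
    (hsq : IsSquare (algebraMap F F⟮y⟯ c * AdjoinSimple.gen F y)) :
    IsSquare ((minpoly F y).coeff 0) := by
  have hgen := Algebra.PowerBasis.norm_gen_eq_coeff_zero_minpoly (adjoin.powerBasis hy)
  rw [adjoin.powerBasis_gen, minpoly_gen, adjoin.powerBasis_dim, heven.neg_one_pow, one_mul] at hgen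
  have hnorm := hsq.map (Algebra.norm F)
  rw [map_mul, hgen, Algebra.norm_algebraMap, adjoin.finrank hy] at hnorm
  simpa [hc] using hnorm.div (heven.isSquare_pow c)

end SquareDescent

section MinpolyExpand

variable {F E : Type*} [Field F] [Field E] [Algebra F E] {x : E} {n : ℕ} {g : F[X]}

lemma minpoly_pow_of_minpoly_eq_expand (hx : IsIntegral F x) (hn : n ≠ 0)
    (h : minpoly F x = expand F n g) : minpoly F (x ^ n) = g := by
  have hirr : Irreducible g := of_irreducible_expand hn (h ▸ minpoly.irreducible hx)
  have hmonic : g.Monic := (monic_expand_iff (Nat.pos_of_ne_zero hn)).1 (h ▸ minpoly.monic hx)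
  refine (minpoly.eq_of_irreducible_of_monic hirr ?_ hmonic).symm
  rw [← expand_aeval, ← h, minpoly.aeval]

lemma adjoin_simple_eq_top_of_adjoin_simple_eq_top (M : IntermediateField F E) (hx : F⟮x⟯ = ⊤) :
    M⟮x⟯ = ⊤ := by
  rw [← restrictScalars_eq_top_iff (K := F), restrictScalars_adjoin_eq_sup, hx, sup_top_eq]

variable [FiniteDimensional F E]

lemma finrank_adjoin_pow_of_minpoly_eq_expand (hx : F⟮x⟯ = ⊤) (hn : n ≠ 0)
    (h : minpoly F x = expand F n g) : Module.finrank F⟮x ^ n⟯ E = n := by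
  have hint : IsIntegral F x := .of_finite F x
  have hpow : Module.finrank F F⟮x ^ n⟯ = g.natDegree := by
    rw [adjoin.finrank (hint.pow n), minpoly_pow_of_minpoly_eq_expand hint hn h]
  have hdeg : Module.finrank F E = g.natDegree * n := by
    rw [← (Field.primitive_element_iff_minpoly_natDegree_eq F x).1 hx, h, natDegree_expand]
  have hpos : 0 < g.natDegree := Nat.pos_of_mul_pos_right (hdeg ▸ Module.finrank_pos)
  refine Nat.eq_of_mul_eq_mul_left hpos ?_
  rw [← hdeg, ← hpow, Module.finrank_mul_finrank]

lemma minpoly_adjoin_pow_of_minpoly_eq_expand (hx : F⟮x⟯ = ⊤) (hn : n ≠ 0)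
    (h : minpoly F x = expand F n g) :
    minpoly F⟮x ^ n⟯ x = X ^ n - C (AdjoinSimple.gen F (x ^ n)) := by
  have hdvd : minpoly F⟮x ^ n⟯ x ∣ X ^ n - C (AdjoinSimple.gen F (x ^ n)) :=
    minpoly.dvd _ _ (by simp)
  have hdeg : (minpoly F⟮x ^ n⟯ x).natDegree = n := by
    rw [(Field.primitive_element_iff_minpoly_natDegree_eq F⟮x ^ n⟯ x).1
      (adjoin_simple_eq_top_of_adjoin_simple_eq_top _ hx),
      finrank_adjoin_pow_of_minpoly_eq_expand hx hn h]
  exact (eq_of_monic_of_dvd_of_natDegree_le (minpoly.monic (.of_finite _ x))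
    (monic_X_pow_sub_C _ hn) hdvd (by rw [natDegree_X_pow_sub_C, hdeg])).symm

lemma isSquare_or_isSquare_mul_of_minpoly_eq_X_pow_sub_C (h2 : (2 : F) ≠ 0) (hx : F⟮x⟯ = ⊤)
    {m : ℕ} (hm : Odd m) {c d : F} (hmin : minpoly F x = X ^ (2 * m) - C d)
    (hc : IsSquare (algebraMap F E c)) : IsSquare c ∨ IsSquare (c * d) := by
  have hexp : minpoly F x = expand F m (X ^ 2 - C d) := by simp [hmin, ← pow_mul, mul_comm]
  have hroot : (x ^ m) ^ 2 + algebraMap F E 0 * x ^ m + algebraMap F E (-d) = 0 := by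
    have := minpoly.aeval F x
    rw [hmin] at this
    simpa [← pow_mul, mul_comm, ← sub_eq_add_neg] using this
  have hodd : Odd (Module.finrank F⟮x ^ m⟯ E) := by
    rwa [finrank_adjoin_pow_of_minpoly_eq_expand hx hm.pos.ne' hexp]
  have hc' : IsSquare (algebraMap F F⟮x ^ m⟯ c) :=
    isSquare_of_isSquare_algebraMap_of_odd_finrank hodd hc
  refine (isSquare_or_isSquare_mul_discrim_of_isSquare_adjoin_simple h2 hroot hc').imp_right ?_
  intro hsq
  have hdiv : c * d = c * (0 ^ 2 - 4 * -d) / 2 ^ 2 := by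
    rw [eq_div_iff (pow_ne_zero 2 h2)]
    ring
  exact hdiv ▸ hsq.div (IsSquare.sq 2)

lemma not_isSquare_algebraMap_of_minpoly_eq_expand_quadratic (h2 : (2 : F) ≠ 0)
    (hx : F⟮x⟯ = ⊤) {m : ℕ} (hm : Odd m) {a b : F}
    (hmin : minpoly F x = expand F (2 * m) (X ^ 2 + C a * X + C b)) (hb : ¬ IsSquare b) {c : F}
    (hc : ¬ IsSquare c) (hcd : ¬ IsSquare (c * (a ^ 2 - 4 * b))) :
    ¬ IsSquare (algebraMap F E c) := by
  intro hsq
  have h2m : 2 * m ≠ 0 := mul_ne_zero two_ne_zero hm.pos.ne'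
  have hmin_pow := minpoly_pow_of_minpoly_eq_expand (.of_finite F x) h2m hmin
  have hroot : (x ^ (2 * m)) ^ 2 + algebraMap F E a * x ^ (2 * m) + algebraMap F E b = 0 := by
    simpa [hmin_pow] using minpoly.aeval F (x ^ (2 * m))
  have hmap2 : (2 : F⟮x ^ (2 * m)⟯) ≠ 0 := by
    simpa only [map_ofNat] using (map_ne_zero (algebraMap F F⟮x ^ (2 * m)⟯)).2 h2
  rcases isSquare_or_isSquare_mul_of_minpoly_eq_X_pow_sub_C hmap2
    (adjoin_simple_eq_top_of_adjoin_simple_eq_top _ hx) hm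
    (minpoly_adjoin_pow_of_minpoly_eq_expand hx h2m hmin)
    (c := algebraMap F _ c) (by rwa [← IsScalarTower.algebraMap_apply]) with hF | hF
  · rcases isSquare_or_isSquare_mul_discrim_of_isSquare_adjoin_simple h2 hroot hF with h | h
    exacts [hc h, hcd h]
  · have hdeg : (X ^ 2 + C a * X + C b : F[X]).natDegree = 2 := by compute_degree!
    have hcoeff := isSquare_coeff_zero_minpoly_of_isSquare_mul_gen (.of_finite F _)
      (by rw [hmin_pow, hdeg]; exact even_two) (by rintro rfl; exact hc .zero) hF
    exact hb (by simpa [hmin_pow] using hcoeff)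

end MinpolyExpand

section Splitting

variable {K : Type*} [Field K] {a b : K}

lemma isSquare_of_isSquare_mul {c : K} (hc : IsSquare c) (hc0 : c ≠ 0) (h : IsSquare (c * b)) :
    IsSquare b := by
  simpa only [mul_div_cancel_left₀ _ hc0] using h.div hc

lemma exists_cube_eq_mul_root_of_cubic_root (h2 : (2 : K) ≠ 0) {r y : K} (hrb : r ^ 2 ≠ b)
    (hr : r ^ 3 - 3 * b * r + a * b = 0) (hy : y ^ 2 + a * y + b = 0) :
    ∃ u, u ^ 3 = b * y := by
  -- Take `u` with `u + b / u = r`. Then `u ^ 3 + (b / u) ^ 3 = r ^ 3 - 3 * b * r = -a * b`, so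
  -- `u ^ 3` is `b * y` or `b * (-a - y)`; requiring the first fixes `d = u - b / u`.
  have hne : r ^ 2 - b ≠ 0 := sub_ne_zero.2 hrb
  have hdisc : (b * (2 * y + a) / (r ^ 2 - b)) ^ 2 = r ^ 2 - 4 * b := by
    rw [div_pow, div_eq_iff (pow_ne_zero 2 hne)]
    linear_combination 4 * b ^ 2 * hy - (r ^ 3 - 3 * b * r - a * b) * hr
  set d := b * (2 * y + a) / (r ^ 2 - b)
  have hd' : d * (r ^ 2 - b) = b * (2 * y + a) := div_mul_cancel₀ _ hne
  refine ⟨(r + d) / 2, ?_⟩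
  rw [div_pow, div_eq_iff (pow_ne_zero 3 h2)]
  linear_combination (3 * r + d) * hdisc + 4 * hr + 4 * hd'

lemma exists_pow_six_eq_of_isSquare_of_cube (hb : b ≠ 0) (hsq : IsSquare b)
    (hcube : ∃ t, t ^ 3 = b) : ∃ c, c ^ 6 = b := by
  obtain ⟨s, hs⟩ := hsq
  obtain ⟨t, ht⟩ := hcube
  refine ⟨s / t, ?_⟩
  calc (s / t) ^ 6 = (s * s) ^ 3 / (t ^ 3) ^ 2 := by ring
    _ = b := by rw [← hs, ht]; field_simp

lemma splits_expand_quadratic_of_isPrimitiveRoot {n : ℕ} {ζ x c : K} (hζ : IsPrimitiveRoot ζ n)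
    (hx : x ≠ 0) (hroot : (x ^ n) ^ 2 + a * x ^ n + b = 0) (hc : c ^ n = b) :
    (expand K n (X ^ 2 + C a * X + C b)).Splits := by
  have hfactor : expand K n (X ^ 2 + C a * X + C b)
      = (X ^ n - C (x ^ n)) * (X ^ n - C ((c / x) ^ n)) := by
    have hsum : a = -(x ^ n + (c / x) ^ n) := by
      rw [div_pow, hc]; field_simp; linear_combination hroot
    have hprod : b = x ^ n * (c / x) ^ n := by
      rw [div_pow, hc]; field_simp
    rw [hsum, hprod]
    simp only [map_add, map_mul, map_pow, map_neg, expand_X, expand_C]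
    ring
  rw [hfactor]
  exact (X_pow_sub_C_splits_of_isPrimitiveRoot hζ rfl).mul
    (X_pow_sub_C_splits_of_isPrimitiveRoot hζ rfl)

lemma isSquare_neg_three_of_isPrimitiveRoot_six {ζ : K} (hζ : IsPrimitiveRoot ζ 6) :
    IsSquare (-3 : K) := by
  have hroot := hζ.isRoot_cyclotomic (by norm_num)
  rw [cyclotomic_six, IsRoot.def] at hroot
  simp only [eval_add, eval_sub, eval_pow, eval_X, eval_one] at hroot
  exact ⟨2 * ζ - 1, by linear_combination -4 * hroot⟩

lemma six_ne_zero_of_not_isSquare_neg_three (h : ¬ IsSquare (-3 : K)) : (6 : K) ≠ 0 := by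
  intro h6
  have h23 : (2 : K) * 3 = 0 := by linear_combination h6
  rcases mul_eq_zero.1 h23 with h2 | h3
  · exact h ⟨1, by linear_combination -2 * h2⟩
  · exact h ⟨0, by linear_combination -h3⟩

lemma irreducible_cyclotomic_six_of_not_isSquare_neg_three (h : ¬ IsSquare (-3 : K)) :
    Irreducible (cyclotomic 6 K) := by
  have : NeZero ((6 : ℕ) : K) := ⟨by exact_mod_cast six_ne_zero_of_not_isSquare_neg_three h⟩
  refine irreducible_of_degree_le_three_of_not_isRoot ?_ fun ζ hζ ↦
    h (isSquare_neg_three_of_isPrimitiveRoot_six (isRoot_cyclotomic_iff.1 hζ))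
  rw [natDegree_cyclotomic]
  decide

lemma splits_expand_six_quadratic {ζ x : K} (hζ : IsPrimitiveRoot ζ 6) (hb : b ≠ 0)
    (hroot : (x ^ 6) ^ 2 + a * x ^ 6 + b = 0)
    (hsq : IsSquare (-3 * b) ∨ IsSquare (-3 * b * (a ^ 2 - 4 * b))) (hdisc : a ^ 2 - 4 * b ≠ 0)
    (hcube : (∃ c, c ^ 3 = b) ∨ ∃ r, r ^ 2 ≠ b ∧ r ^ 3 - 3 * b * r + a * b = 0) :
    (expand K 6 (X ^ 2 + C a * X + C b)).Splits := by
  have hx : x ≠ 0 := by rintro rfl; exact hb (by simpa using hroot)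
  have h6 : (6 : K) ≠ 0 := by exact_mod_cast hζ.neZero'.out
  have h2 : (2 : K) ≠ 0 := fun h ↦ h6 (by linear_combination 3 * h)
  have h3 : (-3 : K) ≠ 0 := fun h ↦ h6 (by linear_combination -2 * h)
  have hneg3 : IsSquare (-3 : K) := isSquare_neg_three_of_isPrimitiveRoot_six hζ
  have hbsq : IsSquare b := by
    have hdiscsq : IsSquare (a ^ 2 - 4 * b) := ⟨2 * x ^ 6 + a, by linear_combination -4 * hroot⟩
    exact isSquare_of_isSquare_mul hneg3 h3 <| hsq.elim id fun h ↦
      isSquare_of_isSquare_mul hdiscsq hdisc (by rwa [mul_comm])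
  have hbcube : ∃ t, t ^ 3 = b := by
    refine hcube.elim id fun ⟨r, hrb, hr⟩ ↦ ?_
    obtain ⟨u, hu⟩ := exists_cube_eq_mul_root_of_cubic_root h2 hrb hr hroot
    exact ⟨u / x ^ 2, by rw [div_pow, hu]; field_simp⟩
  obtain ⟨c, hc⟩ := exists_pow_six_eq_of_isSquare_of_cube hb hbsq hbcube
  exact splits_expand_quadratic_of_isPrimitiveRoot hζ hx hroot hc

end Splitting

section CyclotomicExtension

variable {F E K : Type*} [Field F] [Field E] [Field K] [Algebra F E] [Algebra E K] [Algebra F K]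
  [IsScalarTower F E K]

lemma isSplittingField_expand_of_isCyclotomicExtension {n : ℕ} [NeZero n]
    [IsCyclotomicExtension {n} E K] {g : F[X]} {x : E} (hx : F⟮x⟯ = ⊤) (hx0 : x ≠ 0)
    (hroot : aeval (x ^ n) g = 0) (hsplits : ((expand F n g).map (algebraMap F K)).Splits)
    (hg : g ≠ 0) : (expand F n g).IsSplittingField F K := by
  refine isSplittingField_iff_intermediateField.2 ⟨hsplits, ?_⟩
  set M := adjoin F ((expand F n g).rootSet K)
  have hζ := IsCyclotomicExtension.zeta_spec n E K
  set ζ := IsCyclotomicExtension.zeta n E K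
  have hmem : ∀ z : K, z ^ n = 1 → z * algebraMap E K x ∈ M := fun z hz ↦ by
    refine subset_adjoin F _ ((mem_rootSet_of_ne ((expand_ne_zero (NeZero.pos n)).2 hg)).2 ?_)
    rw [expand_aeval, mul_pow, hz, one_mul, ← map_pow, aeval_algebraMap_apply, hroot, map_zero]
  have hxM : algebraMap E K x ∈ M := by simpa using hmem 1 (one_pow n)
  have hζM : ζ ∈ M := by
    simpa [hx0] using div_mem (hmem ζ hζ.pow_eq_one) hxM
  have hEM : (IsScalarTower.toAlgHom F E K).fieldRange ≤ M := by
    rw [AlgHom.fieldRange_eq_map, ← hx, adjoin_map, Set.image_singleton]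
    exact adjoin_simple_le_iff.2 hxM
  refine eq_top_iff.2 fun y _ ↦ ?_
  have hy : y ∈ Algebra.adjoin E {ζ} := by
    rw [IsCyclotomicExtension.adjoin_primitive_root_eq_top hζ]; trivial
  induction hy using Algebra.adjoin_induction with
  | mem z hz => exact Set.mem_singleton_iff.1 hz ▸ hζM
  | algebraMap e => exact hEM ⟨e, rfl⟩
  | add _ _ _ _ hu hv => exact add_mem (hu trivial) (hv trivial)
  | mul _ _ _ _ hu hv => exact mul_mem (hu trivial) (hv trivial)

end CyclotomicExtension

section GaloisGroup

variable {F : Type*} [Field F]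

lemma separable_of_irreducible_of_natDegree_ne_zero {f : F[X]} (hirr : Irreducible f)
    (hdeg : (f.natDegree : F) ≠ 0) : f.Separable := by
  refine (separable_iff_derivative_ne_zero hirr).2 fun hder ↦ ?_
  have hpos : f.natDegree - 1 + 1 = f.natDegree :=
    Nat.sub_add_cancel (Nat.pos_of_ne_zero (by rintro h; simp [h] at hdeg))
  have hcoeff := congrArg (coeff · (f.natDegree - 1)) hder
  rw [coeff_derivative, ← Nat.cast_succ, Nat.succ_eq_add_one, hpos, coeff_zero] at hcoeff
  exact mul_ne_zero (leadingCoeff_ne_zero.2 hirr.ne_zero) hdeg hcoeff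

lemma card_gal_eq_finrank_of_isSplittingField {f : F[X]} (hf : f.Separable) (K : Type*) [Field K]
    [Algebra F K] [f.IsSplittingField F K] : Nat.card f.Gal = Module.finrank F K := by
  rw [Gal.card_of_separable hf]
  exact (IsSplittingField.algEquiv K f).toLinearEquiv.finrank_eq.symm

end GaloisGroup

section ExpandSixQuadratic

variable {F E K : Type*} [Field F] [Field E] [Field K] [Algebra F E] [Algebra E K] [Algebra F K]
  [IsScalarTower F E K] {a b : F} {x : E}

lemma not_isSquare_neg_three_of_minpoly_eq_expand_six_quadratic [FiniteDimensional F E]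
    (h3 : ¬ IsSquare (-3 : F)) (hx : F⟮x⟯ = ⊤)
    (hmin : minpoly F x = expand F 6 (X ^ 2 + C a * X + C b)) (hb : ¬ IsSquare b)
    (hd : ¬ IsSquare (-3 * (a ^ 2 - 4 * b))) : ¬ IsSquare (-3 : E) := by
  have h2 : (2 : F) ≠ 0 := fun h ↦
    six_ne_zero_of_not_isSquare_neg_three h3 (by linear_combination 3 * h)
  simpa only [map_neg, map_ofNat] using
    not_isSquare_algebraMap_of_minpoly_eq_expand_quadratic h2 hx (by decide : Odd 3) hmin hb h3 hd

lemma isSplittingField_expand_six_quadratic [IsCyclotomicExtension {6} E K]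
    (hx : F⟮x⟯ = ⊤) (hroot : aeval (x ^ 6) (X ^ 2 + C a * X + C b) = 0) (hb : ¬ IsSquare b)
    (hsq : IsSquare (-3 * b) ∨ IsSquare (-3 * b * (a ^ 2 - 4 * b))) (hdisc : a ^ 2 - 4 * b ≠ 0)
    (hcube : (∃ c, c ^ 3 = b) ∨ ∃ r, r ^ 3 - 3 * b * r + a * b = 0) :
    (expand F 6 (X ^ 2 + C a * X + C b)).IsSplittingField F K := by
  have hb0 : b ≠ 0 := fun h ↦ hb (h ▸ IsSquare.zero)
  have hrootE : (x ^ 6) ^ 2 + algebraMap F E a * x ^ 6 + algebraMap F E b = 0 := by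
    simpa using hroot
  have hx0 : x ≠ 0 := by rintro rfl; exact hb0 (by simpa using hrootE)
  refine isSplittingField_expand_of_isCyclotomicExtension hx hx0 hroot ?_
    (Monic.ne_zero (by monicity!))
  set φ := algebraMap F K with hφ
  have hrootK : (algebraMap E K x ^ 6) ^ 2 + φ a * algebraMap E K x ^ 6 + φ b = 0 := by
    simpa [hφ, IsScalarTower.algebraMap_apply F E K] using congrArg (algebraMap E K) hrootE
  have hsqK : IsSquare (-3 * φ b) ∨ IsSquare (-3 * φ b * (φ a ^ 2 - 4 * φ b)) := by
    refine hsq.imp (fun h ↦ ?_) fun h ↦ ?_ <;> simpa [map_ofNat] using h.map φ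
  have hdiscK : φ a ^ 2 - 4 * φ b ≠ 0 := by simpa [map_ofNat] using (map_ne_zero φ).2 hdisc
  have hcubeK : (∃ c, c ^ 3 = φ b) ∨ ∃ r, r ^ 2 ≠ φ b ∧ r ^ 3 - 3 * φ b * r + φ a * φ b = 0 := by
    refine hcube.imp (fun ⟨c, hc⟩ ↦ ⟨φ c, by rw [← map_pow, hc]⟩) fun ⟨r, hr⟩ ↦ ⟨φ r, ?_, ?_⟩
    · rw [← map_pow]
      exact φ.injective.ne fun h ↦ hb (h ▸ IsSquare.sq r)
    · simpa [map_ofNat] using congrArg φ hr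
  simpa [map_expand] using splits_expand_six_quadratic (IsCyclotomicExtension.zeta_spec 6 E K)
    ((map_ne_zero φ).2 hb0) hrootK hsqK hdiscK hcubeK

lemma card_gal_expand_six_quadratic [FiniteDimensional F E] (h3 : ¬ IsSquare (-3 : F))
    (hx : F⟮x⟯ = ⊤) (hmin : minpoly F x = expand F 6 (X ^ 2 + C a * X + C b)) (hb : ¬ IsSquare b)
    (hd : ¬ IsSquare (-3 * (a ^ 2 - 4 * b)))
    (hsq : IsSquare (-3 * b) ∨ IsSquare (-3 * b * (a ^ 2 - 4 * b)))
    (hcube : (∃ c, c ^ 3 = b) ∨ ∃ r, r ^ 3 - 3 * b * r + a * b = 0) :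
    Nat.card (expand F 6 (X ^ 2 + C a * X + C b)).Gal = 24 := by
  have hdeg : (expand F 6 (X ^ 2 + C a * X + C b)).natDegree = 12 := by
    rw [natDegree_expand, show (X ^ 2 + C a * X + C b : F[X]).natDegree = 2 by compute_degree!]
  have hfin : Module.finrank F E = 12 := by
    rw [← (Field.primitive_element_iff_minpoly_natDegree_eq F x).1 hx, hmin, hdeg]
  have h3E := not_isSquare_neg_three_of_minpoly_eq_expand_six_quadratic h3 hx hmin hb hd
  have hroot : aeval (x ^ 6) (X ^ 2 + C a * X + C b) = 0 := by
    rw [← expand_aeval, ← hmin, minpoly.aeval]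
  have hdisc : a ^ 2 - 4 * b ≠ 0 := fun h ↦ hd (by simp [h])
  have h12 : (12 : F) ≠ 0 := fun h ↦
    pow_ne_zero 2 (six_ne_zero_of_not_isSquare_neg_three h3) (by linear_combination 3 * h)
  have hsep : (expand F 6 (X ^ 2 + C a * X + C b)).Separable :=
    separable_of_irreducible_of_natDegree_ne_zero (hmin ▸ minpoly.irreducible (.of_finite F x))
      (by rw [hdeg]; exact_mod_cast h12)
  have : NeZero ((6 : ℕ) : E) := ⟨by exact_mod_cast six_ne_zero_of_not_isSquare_neg_three h3E⟩
  have := isSplittingField_expand_six_quadratic (K := CyclotomicField 6 E) hx hroot hb hsq hdisc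
    hcube
  rw [card_gal_eq_finrank_of_isSplittingField hsep (CyclotomicField 6 E),
    ← Module.finrank_mul_finrank F E, hfin, IsCyclotomicExtension.finrank _
      (irreducible_cyclotomic_six_of_not_isSquare_neg_three h3E)]
  decide

end ExpandSixQuadratic

theorem gal_order_twentyfour_of_12T12_or_13_general {k : Type*} [Field k]
    (h3 : ¬ IsSquare (-3 : k)) (a b : k) (f : k[X]) (hf : f = X ^ 12 + C a * X ^ 6 + C b)
    (hirr : Irreducible f) (hb : ¬ IsSquare b) (hd : ¬ IsSquare (3 * (4 * b - a ^ 2)))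
    (h3b : IsSquare (-3 * b) ∨ IsSquare (3 * b * (4 * b - a ^ 2)))
    (hcr : (∃ c : k, c ^ 3 = b) ∨ ∃ r : k, r ^ 3 - 3 * b * r + a * b = 0) :
    Nat.card f.Gal = 24 := by
  have hmonic : f.Monic := by rw [hf]; monicity!
  obtain rfl : f = expand k 6 (X ^ 2 + C a * X + C b) := by simp [hf, ← pow_mul]
  have := Fact.mk hirr
  have := hmonic.finite_adjoinRoot
  have hmin : minpoly k (AdjoinRoot.root (expand k 6 (X ^ 2 + C a * X + C b))) = _ :=
    AdjoinRoot.minpoly_root hirr.ne_zero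
  rw [hmonic.leadingCoeff, inv_one, C_1, mul_one] at hmin
  refine card_gal_expand_six_quadratic h3 (adjoin_root_eq_top _) hmin hb ?_ ?_ hcr
  · rwa [show -3 * (a ^ 2 - 4 * b) = 3 * (4 * b - a ^ 2) by ring]
  · rwa [show -3 * b * (a ^ 2 - 4 * b) = 3 * b * (4 * b - a ^ 2) by ring]

theorem gal_order_twentyfour_of_12T12_or_13 (a b : ℚ) (f : ℚ[X])
    (hf : f = X ^ 12 + C a * X ^ 6 + C b) (hirr : Irreducible f)
    (hb_nsq : ¬ ∃ s : ℚ, s ^ 2 = b)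
    (hbd : ¬ ∃ s : ℚ, s ^ 2 = b * (a ^ 2 - 4 * b))
    (hd : ¬ ∃ s : ℚ, s ^ 2 = 3 * (4 * b - a ^ 2))
    (h3b : (∃ s : ℚ, s ^ 2 = -3 * b) ∨ ∃ s : ℚ, s ^ 2 = 3 * b * (4 * b - a ^ 2))
    (hcr : (∃ c : ℚ, c ^ 3 = b) ∨ ∃ r : ℚ, r ^ 3 - 3 * b * r + a * b = 0) :
    Nat.card f.Gal = 24 := by
  simp only [eq_comm (a := _ ^ 2), ← isSquare_iff_exists_sq] at hb_nsq hd h3b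
  exact gal_order_twentyfour_of_12T12_or_13_general (fun h ↦ absurd h.nonneg (by norm_num))
    a b f hf hirr hb_nsq hd h3b hcr
end
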